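/- arXiv:1504.07752 — 2 statements merged into one kernel-verified Lean document; each statement's English description precedes it below -/
import Mathlib

section
/- Quantitative solvability of the parameter update: Let C_Φ, M, r > 0 and δ ≥ 0. Let T : ℝ → ℝ be continuously differentiable on [−r, r] with T(0) = 0 and |T'(z)| ≤ M·|z| for all |z| ≤ r. Let Φ₀, e₀ ∈ ℝ with |Φ₀| ≥ 1/C_Φ and |e₀| ≤ δ. If 2·C_Φ·δ ≤ r and 4·M·C_Φ²·δ ≤ 1, then there exists a unique μ ∈ [−2·C_Φ·δ, 2·C_Φ·δ] satisfying e₀ + Φ₀·μ + T(μ) = 0; in particular |μ| ≤ 2·C_Φ·δ. -/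
/-!
Put `ρ = 2·CΦ·δ` and `L = 1/(2·CΦ)`. On `[-ρ, ρ]` the derivative bound gives
`|T'| ≤ M·ρ = 2·M·CΦ·δ ≤ L`, so `T` is `L`-Lipschitz there by the mean value inequality,
and `|T(±ρ)| ≤ L·ρ = δ`.

Since `|Φ₀| ≥ 1/CΦ = 2·L`, the linear term dominates. At the endpoints `|Φ₀·ρ| ≥ 2·δ`, while
`|e₀ + T(±ρ)| ≤ 2·δ`, so `e₀ + Φ₀·μ + T(μ)` changes sign and the intermediate value theorem
gives a root. Two roots `x, y` satisfy `2·L·|x - y| ≤ |Φ₀·(x - y)| = |T(x) - T(y)| ≤ L·|x - y|`,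
hence coincide; this is the contraction estimate, with factor `1/2`, for
`z ↦ -(e₀ + T(z))/Φ₀`.
-/

open Set

/-- `T` is Lipschitz with constant `1 / (2 * CΦ)`, half the lower bound on `|Φ₀|`, on the
interval where the root is sought. -/
lemma abs_sub_le_on_search_interval
    (CΦ M r δ : ℝ) (hCΦ : 0 < CΦ) (hM : 0 < M)
    (T : ℝ → ℝ) (hT : ContDiffOn ℝ 1 T (Set.Icc (-r) r))
    (hT' : ∀ z ∈ Set.Icc (-r) r, |derivWithin T (Set.Icc (-r) r) z| ≤ M * |z|)
    (h1 : 2 * CΦ * δ ≤ r) (h2 : 4 * M * CΦ ^ 2 * δ ≤ 1) (x y : ℝ)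
    (hx : x ∈ Set.Icc (-(2 * CΦ * δ)) (2 * CΦ * δ))
    (hy : y ∈ Set.Icc (-(2 * CΦ * δ)) (2 * CΦ * δ)) :
    |T y - T x| ≤ 1 / (2 * CΦ) * |y - x| := by
  have hsub : Set.Icc (-(2 * CΦ * δ)) (2 * CΦ * δ) ⊆ Set.Icc (-r) r :=
    Set.Icc_subset_Icc (by linarith) h1
  refine (convex_Icc (-(2 * CΦ * δ)) (2 * CΦ * δ)).norm_image_sub_le_of_norm_hasDerivWithin_le
    (f' := derivWithin T (Set.Icc (-r) r)) (fun z hz => ?_) (fun z hz => ?_) hx hy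
  · exact ((hT.differentiableOn one_ne_zero z (hsub hz)).hasDerivWithinAt).mono hsub
  · have hz' : |z| ≤ 2 * CΦ * δ := abs_le.mpr hz
    calc |derivWithin T (Set.Icc (-r) r) z| ≤ M * |z| := hT' z (hsub hz)
      _ ≤ M * (2 * CΦ * δ) := by gcongr
      _ ≤ 1 / (2 * CΦ) := by
        rw [le_div_iff₀ (by positivity)]
        linarith

/-- **Quantitative solvability of the parameter update.** If `T` is `C¹` on `[-r,r]`
with `T(0) = 0` and `|T'(z)| ≤ M·|z|`, `|Φ₀| ≥ 1/C_Φ`, `|e₀| ≤ δ`, and the smallness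
conditions `2·C_Φ·δ ≤ r` and `4·M·C_Φ²·δ ≤ 1` hold, then the equation
`e₀ + Φ₀·μ + T(μ) = 0` has a unique solution `μ` in `[-2·C_Φ·δ, 2·C_Φ·δ]`;
in particular `|μ| ≤ 2·C_Φ·δ`. -/
theorem parameter_update_solvable
    (CΦ M r δ : ℝ) (hCΦ : 0 < CΦ) (hM : 0 < M) (hr : 0 < r) (hδ : 0 ≤ δ)
    (T : ℝ → ℝ) (hT : ContDiffOn ℝ 1 T (Set.Icc (-r) r)) (hT0 : T 0 = 0)
    (hT' : ∀ z ∈ Set.Icc (-r) r, |derivWithin T (Set.Icc (-r) r) z| ≤ M * |z|)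
    (Φ₀ e₀ : ℝ) (hΦ₀ : 1 / CΦ ≤ |Φ₀|) (he₀ : |e₀| ≤ δ)
    (h1 : 2 * CΦ * δ ≤ r) (h2 : 4 * M * CΦ ^ 2 * δ ≤ 1) :
    ∃! μ : ℝ, μ ∈ Set.Icc (-(2 * CΦ * δ)) (2 * CΦ * δ) ∧ e₀ + Φ₀ * μ + T μ = 0 := by
  have hLip := abs_sub_le_on_search_interval CΦ M r δ hCΦ hM T hT hT' h1 h2
  have hρ : 0 ≤ 2 * CΦ * δ := by positivity
  have hLρ : 1 / (2 * CΦ) * (2 * CΦ * δ) = δ := by field_simp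
  have hCρ : 1 / CΦ * (2 * CΦ * δ) = 2 * δ := by field_simp
  have h0 : (0 : ℝ) ∈ Set.Icc (-(2 * CΦ * δ)) (2 * CΦ * δ) := ⟨by linarith, hρ⟩
  have hTr := hLip 0 (2 * CΦ * δ) h0 ⟨by linarith, le_rfl⟩
  have hTl := hLip 0 (-(2 * CΦ * δ)) h0 ⟨le_rfl, by linarith⟩
  rw [hT0, sub_zero, sub_zero, abs_of_nonneg hρ, hLρ] at hTr
  rw [hT0, sub_zero, sub_zero, abs_neg, abs_of_nonneg hρ, hLρ] at hTl
  have hΦρ : 2 * δ ≤ |Φ₀| * (2 * CΦ * δ) := hCρ ▸ mul_le_mul_of_nonneg_right hΦ₀ hρ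
  rw [abs_le] at hTr hTl he₀
  have hcont : ContinuousOn (fun μ => e₀ + Φ₀ * μ + T μ)
      (Set.uIcc (-(2 * CΦ * δ)) (2 * CΦ * δ)) := by
    rw [Set.uIcc_of_le (by linarith)]
    have hTc := hT.continuousOn.mono (Set.Icc_subset_Icc (neg_le_neg h1) h1)
    fun_prop
  have hzero : (0 : ℝ) ∈ Set.uIcc (e₀ + Φ₀ * (-(2 * CΦ * δ)) + T (-(2 * CΦ * δ)))
      (e₀ + Φ₀ * (2 * CΦ * δ) + T (2 * CΦ * δ)) := by
    rw [Set.mem_uIcc, mul_neg]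
    rcases le_total 0 Φ₀ with h | h
    · rw [abs_of_nonneg h] at hΦρ
      left
      constructor <;> linarith
    · rw [abs_of_nonpos h, neg_mul] at hΦρ
      right
      constructor <;> linarith
  obtain ⟨μ, hμ, hμ0⟩ := intermediate_value_uIcc hcont hzero
  rw [Set.uIcc_of_le (by linarith)] at hμ
  refine ⟨μ, ⟨hμ, hμ0⟩, ?_⟩
  rintro ν ⟨hν, hν0⟩
  have hd : T ν - T μ = -(Φ₀ * (ν - μ)) := by
    simp only at hμ0
    linarith
  have hL := hLip μ ν hμ hν
  rw [hd, abs_neg, abs_mul] at hL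
  have hlow := mul_le_mul_of_nonneg_right hΦ₀ (abs_nonneg (ν - μ))
  have hhalf : 1 / CΦ = 2 * (1 / (2 * CΦ)) := by field_simp
  rw [hhalf] at hlow
  have hpos : 0 < 1 / (2 * CΦ) := by positivity
  have hle : |ν - μ| ≤ 0 := by
    by_contra! hgt
    linarith [mul_pos hpos hgt]
  exact sub_eq_zero.mp (abs_nonpos_iff.mp hle)
end

section
/- First iteration of the canard algorithm for the van der Pol system: Let ε ∈ ℝ with ε ≠ 0. Define ζ¹(x) := x³/3 − x − ε/(1+x) for real x ≠ −1, and define ρ₁(x, μ) := −(ζ¹)'(x)·(ζ¹(x) − x³/3 + x) + ε·(μ − x). Then: (a) for all real x ≠ −1 and all μ ∈ ℝ, ρ₁(x, μ) = ε·(μ − 1) + ε²/(1+x)³; (b) ρ₁(1, μ) = 0 if and only if μ = μ¹ := 1 − ε/8; (c) for this value, ρ₁(x, μ¹) = ε²·((1+x)^{−3} − 1/8) for all x ≠ −1, which vanishes at x = 1. In particular, the first iterate of the algorithm yields the canard point approximation μ¹ = 1 − ε/8, reproducing the first-order term of the asymptotic expansion μ = 1 − ε/8 − 3ε²/32 − 173ε³/1024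 + O(ε⁴) of the canard explosion point, and the remaining defect of the graph y = ζ¹(x) at z = μ¹ is O(ε²). -/
/-! On the graph of `ζ¹` the vector field has first component `F(x, ζ¹(x)) = -ε/(1+x)`, while
`(ζ¹)'(x) = (x-1)(x+1) + ε/(1+x)²`. In the product the pole cancels against the factor `x+1`
that comes from the critical manifold, leaving `ε(x-1) + ε²/(1+x)³`; adding `ε(μ-x)` gives (a).
The other parts evaluate (a) at `x = 1`, where it reads `ε(μ - 1 + ε/8)`, and at
`μ = 1 - ε/8`. -/

theorem hasDerivAt_vdp_graph (ε x : ℝ) (hx : 1 + x ≠ 0) :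
    HasDerivAt (fun x : ℝ => x ^ 3 / 3 - x - ε / (1 + x)) (x ^ 2 - 1 + ε / (1 + x) ^ 2) x := by
  have h := (((hasDerivAt_id' x).pow 3).div_const 3).sub (hasDerivAt_id' x) |>.sub
    ((hasDerivAt_const x ε).div ((hasDerivAt_id' x).const_add 1) hx)
  refine h.congr_deriv ?_
  simp only [Nat.cast_ofNat]
  field_simp
  ring

/-- **First iteration of the canard algorithm for the van der Pol system.** With
`ζ¹(x) = x³/3 - x - ε/(1+x)` and defect
`ρ₁(x,μ) = -(ζ¹)'(x)·(ζ¹(x) - x³/3 + x) + ε·(μ - x)`: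
(a) `ρ₁(x,μ) = ε·(μ-1) + ε²/(1+x)³` for `x ≠ -1`;
(b) `ρ₁(1,μ) = 0` iff `μ = μ¹ = 1 - ε/8` (the first-order canard point);
(c) `ρ₁(x, μ¹) = ε²·(1/(1+x)³ - 1/8)`, which vanishes at `x = 1`. -/
theorem vdp_first_iteration (ε : ℝ) (hε : ε ≠ 0) :
    let ζ1 : ℝ → ℝ := fun x => x ^ 3 / 3 - x - ε / (1 + x)
    let ρ1 : ℝ → ℝ → ℝ := fun x μ =>
      -(deriv ζ1 x) * (ζ1 x - x ^ 3 / 3 + x) + ε * (μ - x)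
    (∀ x : ℝ, x ≠ -1 → ∀ μ : ℝ, ρ1 x μ = ε * (μ - 1) + ε ^ 2 / (1 + x) ^ 3) ∧
    (∀ μ : ℝ, ρ1 1 μ = 0 ↔ μ = 1 - ε / 8) ∧
    (∀ x : ℝ, x ≠ -1 → ρ1 x (1 - ε / 8) = ε ^ 2 * (1 / (1 + x) ^ 3 - 1 / 8)) ∧
    ρ1 1 (1 - ε / 8) = 0 := by
  intro ζ1 ρ1
  have ha : ∀ x : ℝ, x ≠ -1 → ∀ μ : ℝ, ρ1 x μ = ε * (μ - 1) + ε ^ 2 / (1 + x) ^ 3 := by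
    intro x hx μ
    have hx' : 1 + x ≠ 0 := fun h => hx (by linarith)
    simp only [ρ1, ζ1, (hasDerivAt_vdp_graph ε x hx').deriv]
    field_simp
    ring
  have h1 : ∀ μ : ℝ, ρ1 1 μ = ε * (μ - (1 - ε / 8)) := by
    intro μ
    rw [ha 1 (by norm_num)]
    ring
  refine ⟨ha, fun μ => ?_, fun x hx => ?_, ?_⟩
  · rw [h1, mul_eq_zero, or_iff_right hε, sub_eq_zero]
  · rw [ha x hx]
    ring
  · rw [h1, sub_self, mul_zero]
end
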